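/- arXiv:2008.13562 — 2 statements merged into one kernel-verified Lean document; each statement's English description precedes it below -/
import Mathlib

section
/- Let L be a commutative integral residuated lattice with least element 0 that is involutive: (b ⇨ 0) ⇨ 0 = b for all b ∈ L. For a, b ∈ L write a ⊕ b = (a ⇨ 0) ⇨ b. Then for every lattice filter F of L, the set K(L,F) = {(a,b) ∈ L × L : a ⊕ b ∈ F} is an admissible subuniverse of K(L): it contains (a,1) for every a ∈ L and is closed under the K-expansion operations ∨, ∧, ·, ⇨. -/
/-- A commutative integral residuated lattice. -/
class CIRL (L : Type*) extends Lattice L, CommMonoid L where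
  imp : L → L → L
  resid : ∀ a b c : L, a * b ≤ c ↔ a ≤ imp b c
  le_one : ∀ a : L, a ≤ (1 : L)

namespace CIRL

variable {L : Type*} [CIRL L]

/-- Join in `K(L)`. -/
def kjoin (X Y : L × L) : L × L := (X.1 ⊔ Y.1, X.2 ⊓ Y.2)

/-- Meet in `K(L)`. -/
def kmeet (X Y : L × L) : L × L := (X.1 ⊓ Y.1, X.2 ⊔ Y.2)

/-- Product in `K(L)`. -/
def kmul (X Y : L × L) : L × L := (X.1 * Y.1, imp X.1 Y.2 ⊓ imp Y.1 X.2)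

/-- Implication in `K(L)`. -/
def kimp (X Y : L × L) : L × L := (imp X.1 Y.1 ⊓ imp Y.2 X.2, X.1 * Y.2)

/-- The unit of `K(L)`. -/
def kone : L × L := ((1 : L), (1 : L))

end CIRL

open CIRL

/-!
The operation `a ⊕ b = ¬a ⇨ b` is isotone in `a` and preserves meets in `b`, which gives closure of
`K(L,F)` under joins. Closure under products comes from `¬(a * c) * a ≤ ¬c`, which yields
`c ⊕ d ≤ (a * c) ⊕ (a ⇨ d)`. Involutivity makes `⊕` commutative, so `K(L,F)` is stable under the
swap `(a, b) ↦ (b, a)`; the swap interchanges joins with meets, and it expresses the implication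
of `K(L)` through the product.
-/

namespace CIRL

open Order

variable {L : Type*} [CIRL L] {a b c z : L}

theorem gc_mul_imp (a : L) : GaloisConnection (· * a) (imp a) := fun b c => resid b a c

theorem imp_mul_le (a b : L) : imp a b * a ≤ b := (gc_mul_imp a).l_u_le b

theorem imp_inf (a b c : L) : imp a (b ⊓ c) = imp a b ⊓ imp a c := (gc_mul_imp a).u_inf

theorem imp_one (a : L) : imp a 1 = 1 :=
  (le_one _).antisymm ((resid _ _ _).1 (le_one _))

theorem le_imp_comm : a ≤ imp b c ↔ b ≤ imp a c := by
  rw [← resid, mul_comm, resid]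

theorem imp_le_imp_right (h : a ≤ b) (c : L) : imp b c ≤ imp a c :=
  le_imp_comm.1 (h.trans (le_imp_comm.1 le_rfl))

theorem imp_imp (a b c : L) : imp a (imp b c) = imp (a * b) c :=
  eq_of_forall_le_iff fun x => by rw [← resid, ← resid, ← resid, mul_assoc]

theorem imp_mul_mul_le (a b c : L) : imp (a * b) c * a ≤ imp b c := by
  rw [← imp_imp]
  exact imp_mul_le a (imp b c)

/-- The sum `a ⊕ b = ¬a ⇨ b`, where `¬a = a ⇨ z` is negation relative to an arbitrary element `z`;
the usual sum is the case where `z` is the least element. -/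
def oplus (z a b : L) : L := imp (imp a z) b

theorem oplus_one (z a : L) : oplus z a 1 = 1 := imp_one _

theorem oplus_inf (z a b c : L) : oplus z a (b ⊓ c) = oplus z a b ⊓ oplus z a c := imp_inf _ _ _

theorem oplus_le_oplus_right (h : a ≤ b) (z c : L) : oplus z a c ≤ oplus z b c :=
  imp_le_imp_right (imp_le_imp_right h z) c

theorem oplus_le_oplus_mul_imp (z a c d : L) : oplus z c d ≤ oplus z (a * c) (imp a d) :=
  calc imp (imp c z) d
    _ ≤ imp (imp (a * c) z * a) d := imp_le_imp_right (imp_mul_mul_le a c z) d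
    _ = imp (imp (a * c) z) (imp a d) := (imp_imp _ _ _).symm

theorem oplus_comm (hinv : Function.Involutive (imp · z)) (a b : L) :
    oplus z a b = oplus z b a :=
  calc imp (imp a z) b
    _ = imp (imp a z) (imp (imp b z) z) := congrArg (imp _) (hinv b).symm
    _ = imp (imp b z) (imp (imp a z) z) := by rw [imp_imp, mul_comm, ← imp_imp]
    _ = imp (imp b z) a := congrArg (imp _) (hinv a)

theorem kmeet_eq_swap_kjoin (X Y : L × L) : kmeet X Y = (kjoin X.swap Y.swap).swap := rfl

theorem kimp_eq_swap_kmul (X Y : L × L) : kimp X Y = (kmul X Y.swap).swap := rfl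

/-- The set `K(L,F)` of pairs whose sum lies in the lattice filter `F`, the sum being taken
relative to `z`. -/
def kset (z : L) (F : PFilter L) : Set (L × L) := {X | oplus z X.1 X.2 ∈ F}

variable {F : PFilter L} {X Y : L × L}

theorem one_mem_pfilter (F : PFilter L) : (1 : L) ∈ F :=
  F.nonempty.elim fun x hx => PFilter.mem_of_le (le_one x) hx

theorem mk_one_mem_kset (z : L) (F : PFilter L) (a : L) : (a, 1) ∈ kset z F := by
  change oplus z a 1 ∈ F
  rw [oplus_one]
  exact one_mem_pfilter F

theorem kjoin_mem_kset (hX : X ∈ kset z F) (hY : Y ∈ kset z F) : kjoin X Y ∈ kset z F := by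
  change oplus z (X.1 ⊔ Y.1) (X.2 ⊓ Y.2) ∈ F
  rw [oplus_inf]
  exact PFilter.inf_mem (PFilter.mem_of_le (oplus_le_oplus_right le_sup_left z X.2) hX)
    (PFilter.mem_of_le (oplus_le_oplus_right le_sup_right z Y.2) hY)

theorem kmul_mem_kset (hX : X ∈ kset z F) (hY : Y ∈ kset z F) : kmul X Y ∈ kset z F := by
  have hleft : oplus z (X.1 * Y.1) (imp X.1 Y.2) ∈ F :=
    PFilter.mem_of_le (oplus_le_oplus_mul_imp z X.1 Y.1 Y.2) hY
  have hright : oplus z (X.1 * Y.1) (imp Y.1 X.2) ∈ F := by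
    rw [mul_comm]
    exact PFilter.mem_of_le (oplus_le_oplus_mul_imp z Y.1 X.1 X.2) hX
  change oplus z (X.1 * Y.1) (imp X.1 Y.2 ⊓ imp Y.1 X.2) ∈ F
  rw [oplus_inf]
  exact PFilter.inf_mem hleft hright

theorem swap_mem_kset (hinv : Function.Involutive (imp · z)) (hX : X ∈ kset z F) :
    X.swap ∈ kset z F := by
  change oplus z X.2 X.1 ∈ F
  rwa [oplus_comm hinv]

theorem kmeet_mem_kset (hinv : Function.Involutive (imp · z)) (hX : X ∈ kset z F)
    (hY : Y ∈ kset z F) : kmeet X Y ∈ kset z F := by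
  rw [kmeet_eq_swap_kjoin]
  exact swap_mem_kset hinv (kjoin_mem_kset (swap_mem_kset hinv hX) (swap_mem_kset hinv hY))

theorem kimp_mem_kset (hinv : Function.Involutive (imp · z)) (hX : X ∈ kset z F)
    (hY : Y ∈ kset z F) : kimp X Y ∈ kset z F := by
  rw [kimp_eq_swap_kmul]
  exact swap_mem_kset hinv (kmul_mem_kset hX (swap_mem_kset hinv hY))

end CIRL

/-- If `L` is an involutive CIRL with least element `0` and `F` is a lattice
filter of `L`, then `K(L,F) = {(a,b) : a ⊕ b ∈ F}` is an admissible subuniverse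
of `K(L)`. -/
theorem stmt9 {L : Type*} [CIRL L] (z : L) (hz : ∀ a : L, z ≤ a)
    (hinv : ∀ b : L, CIRL.imp (CIRL.imp b z) z = b)
    (F : Set L) (hFne : F.Nonempty)
    (hFup : ∀ a b : L, a ∈ F → a ≤ b → b ∈ F)
    (hFmeet : ∀ a b : L, a ∈ F → b ∈ F → a ⊓ b ∈ F) :
    let oplus : L → L → L := fun a b => CIRL.imp (CIRL.imp a z) b
    let S : Set (L × L) := {p | oplus p.1 p.2 ∈ F}
    (∀ a : L, (a, (1 : L)) ∈ S) ∧
    kone ∈ S ∧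
    (∀ X Y : L × L, X ∈ S → Y ∈ S →
      kjoin X Y ∈ S ∧ kmeet X Y ∈ S ∧ kmul X Y ∈ S ∧ kimp X Y ∈ S) := by
  intro oplus S
  have hF : Order.IsPFilter F := .of_def hFne
    (fun a ha b hb => ⟨a ⊓ b, hFmeet a b ha hb, inf_le_left, inf_le_right⟩)
    fun hab ha => hFup _ _ ha hab
  have hS : S = kset z hF.toPFilter := rfl
  rw [hS]
  exact ⟨mk_one_mem_kset z _, mk_one_mem_kset z _ 1, fun X Y hX hY =>
    ⟨kjoin_mem_kset hX hY, kmeet_mem_kset hinv hX hY, kmul_mem_kset hX hY,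
      kimp_mem_kset hinv hX hY⟩⟩
end

section
/- Let A be a K-lattice. Then A satisfies the equation (((x ∧ 1) ⇨ y) ∨ ((y ∧ 1) ⇨ x)) ∧ 1 = 1 for all x, y ∈ A if and only if its negative cone is prelinear: (u ⇨₁ v) ∨ (v ⇨₁ u) = 1 for all u, v ∈ A with u ≤ 1 and v ≤ 1. -/
/-- A K-lattice: a commutative residuated lattice that is 1-involutive,
1-distributive and satisfies the equations (K1) and (K2). -/
class KLattice (A : Type*) extends Lattice A, CommMonoid A where
  imp : A → A → A
  resid : ∀ a b c : A, a * b ≤ c ↔ a ≤ imp b c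
  inv1 : ∀ x : A, imp (imp x 1) 1 = x
  dist1 : ∀ x y z : A, (x = 1 ∨ y = 1 ∨ z = 1) →
    x ⊓ (y ⊔ z) = (x ⊓ y) ⊔ (x ⊓ z) ∧ x ⊔ (y ⊓ z) = (x ⊔ y) ⊓ (x ⊔ z)
  k1 : ∀ x y : A, (x * y) ⊓ 1 = (x ⊓ 1) * (y ⊓ 1)
  k2 : ∀ x y : A,
    imp (x ⊓ 1) y ⊓ imp (imp y 1 ⊓ 1) (imp x 1) = imp x y

namespace KLattice

/-- The involution `¬x = x ⇨ 1`. -/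
def neg {A : Type*} [KLattice A] (x : A) : A := imp x 1

end KLattice

open KLattice

/-! Since `- ∧ 1` distributes over joins, the equation at `u, v ≤ 1` is prelinearity at `u, v`.
Conversely, prelinearity at `x ∧ 1, y ∧ 1` gives the equation at `x, y`, because `⇨` is monotone in
its second argument, so that `(x ∧ 1) ⇨ (y ∧ 1) ≤ (x ∧ 1) ⇨ y`. -/

namespace KLattice

variable {A : Type*} [KLattice A]

theorem galoisConnection_mul_imp (b : A) : GaloisConnection (· * b) (imp b) :=
  fun a c => resid a b c

theorem imp_right_mono (a : A) : Monotone (imp a) :=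
  (galoisConnection_mul_imp a).monotone_u

theorem sup_inf_one (a b : A) : (a ⊔ b) ⊓ 1 = (a ⊓ 1) ⊔ (b ⊓ 1) := by
  simpa only [inf_comm] using (dist1 1 a b (Or.inl rfl)).1

end KLattice

theorem stmt19_general {A : Type*} [Lattice A] {imp : A → A → A} {e : A}
    (imp_mono : ∀ a, Monotone (imp a))
    (sup_inf_e : ∀ a b, (a ⊔ b) ⊓ e = (a ⊓ e) ⊔ (b ⊓ e)) :
    (∀ x y : A, (imp (x ⊓ e) y ⊔ imp (y ⊓ e) x) ⊓ e = e) ↔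
    (∀ u v : A, u ≤ e → v ≤ e → (imp u v ⊓ e) ⊔ (imp v u ⊓ e) = e) := by
  constructor
  · intro equation u v hu hv
    simpa only [inf_eq_left.2 hu, inf_eq_left.2 hv, sup_inf_e] using equation u v
  · intro prelinear x y
    rw [inf_eq_right]
    calc
      e = (imp (x ⊓ e) (y ⊓ e) ⊓ e) ⊔ (imp (y ⊓ e) (x ⊓ e) ⊓ e) :=
        (prelinear _ _ inf_le_right inf_le_right).symm
      _ ≤ imp (x ⊓ e) (y ⊓ e) ⊔ imp (y ⊓ e) (x ⊓ e) := sup_le_sup inf_le_left inf_le_left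
      _ ≤ imp (x ⊓ e) y ⊔ imp (y ⊓ e) x :=
        sup_le_sup (imp_mono _ inf_le_left) (imp_mono _ inf_le_left)

/-- A K-lattice `A` satisfies `(((x ∧ 1) ⇨ y) ∨ ((y ∧ 1) ⇨ x)) ∧ 1 = 1` for all
`x, y` if and only if its negative cone is prelinear. -/
theorem stmt19 {A : Type*} [KLattice A] :
    (∀ x y : A,
      (KLattice.imp (x ⊓ 1) y ⊔ KLattice.imp (y ⊓ 1) x) ⊓ 1 = 1) ↔
    (∀ u v : A, u ≤ 1 → v ≤ 1 →
      (KLattice.imp u v ⊓ 1) ⊔ (KLattice.imp v u ⊓ 1) = 1) :=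
  stmt19_general imp_right_mono sup_inf_one
end
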